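/- arXiv:1611.07380 — 2 statements merged into one kernel-verified Lean document; each statement's English description precedes it below -/
import Mathlib

section
/- Let W be an LS(W)⁺-homogeneous closure space in which the empty set is closed, and suppose W fails exchange over the empty set. Then for every element b of W, cl({a : a < b}) = {a : a ≤ b}, where a ≤ b means a ∈ cl({b}) and a < b means a ≤ b but not b ≤ a. -/
open Cardinal Set

universe u v

variable {X : Type u}

/-- `cl` is a closure operator: monotonicity and transitivity. -/
def IsClosure (cl : Set X → Set X) : Prop :=
  (∀ A : Set X, A ⊆ cl A) ∧ ∀ A B : Set X, A ⊆ cl B → cl A ⊆ cl B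

/-- `f` is an automorphism of the closure space `(X, cl)`. -/
def IsAuto (cl : Set X → Set X) (f : X → X) : Prop :=
  Function.Bijective f ∧ ∀ A : Set X, f '' cl A = cl (f '' A)

/-- The closure space `(X, cl)` is `μ`-homogeneous. -/
def IsHomog (cl : Set X → Set X) (μ : Cardinal.{u}) : Prop :=
  ∀ A : Set X, #A < μ → ∀ a b : X, a ∉ cl A → b ∉ cl A →
    ∃ f : X → X, IsAuto cl f ∧ (∀ x ∈ A, f x = x) ∧ f a = b

/-- The closure space `(X, cl)` has exchange over `A`. -/
def ExchOver (cl : Set X → Set X) (A : Set X) : Prop :=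
  ∀ a b : X, a ∈ cl (A ∪ {b}) → a ∉ cl A → b ∈ cl (A ∪ {a})

/-- The localization `W_A`: the closure space on `X \ A` with
`cl^{W_A}(B) = cl(A ∪ B) ∩ (X \ A)`. -/
def locCl (cl : Set X → Set X) (A : Set X) :
    Set {x : X // x ∉ A} → Set {x : X // x ∉ A} :=
  fun B => {x | (x : X) ∈ cl (A ∪ (Subtype.val '' B))}

/-- `κ(W)`: the least infinite cardinal `κ` such that whenever `a ∈ cl A` there is
`A₀ ⊆ A` with `|A₀| < κ` and `a ∈ cl A₀`. -/
noncomputable def kappaCard (cl : Set X → Set X) : Cardinal.{u} :=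
  sInf {κ : Cardinal.{u} | ℵ₀ ≤ κ ∧
    ∀ (A : Set X) (a : X), a ∈ cl A → ∃ A₀, A₀ ⊆ A ∧ #A₀ < κ ∧ a ∈ cl A₀}

/-- `LS(W)`: the least infinite cardinal `μ` such that `|cl A| ≤ |A| + μ` for all `A`. -/
noncomputable def LSCard (cl : Set X → Set X) : Cardinal.{u} :=
  sInf {μ : Cardinal.{u} | ℵ₀ ≤ μ ∧ ∀ A : Set X, #(cl A) ≤ #A + μ}

/-! Let `A = {a : a < b}`; since `cl A ⊆ cl {b}`, it suffices to show `b ∈ cl A`. Suppose not, and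
suppose `b < c` for some `c`. Then `c ∉ cl A`, so homogeneity gives an automorphism `f` fixing `A`
pointwise with `f b = c`. The point `x = f⁻¹ b` satisfies `f x = b < c = f b`, hence `x < b`, so `f`
fixes it and `b = f x = x < b`, which is absurd.

A failure of exchange over `∅` is a pair `a < c` with `a ∉ cl ∅`, and homogeneity over `∅` carries
`a` to any `b ∉ cl ∅`, so that every such `b` lies strictly below something. If instead
`b ∈ cl ∅`, then `b ∈ cl A` by monotonicity. -/

section

variable {cl : Set X → Set X} {μ : Cardinal.{u}} {A B : Set X} {f : X → X} {a b c : X}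

/-- The set of points `a < b`, where `a ≤ b` means `a ∈ cl {b}`; it is the set whose closure the
theorem computes. -/
def strictBelow (cl : Set X → Set X) (b : X) : Set X :=
  {a | a ∈ cl {b} ∧ b ∉ cl {a}}

theorem mem_strictBelow : a ∈ strictBelow cl b ↔ a ∈ cl {b} ∧ b ∉ cl {a} :=
  Iff.rfl

theorem strictBelow_subset_cl_singleton (cl : Set X → Set X) (b : X) :
    strictBelow cl b ⊆ cl {b} :=
  fun _ ha => ha.1

theorem not_exchOver_empty_iff :
    ¬ ExchOver cl ∅ ↔ ∃ a b, a ∈ strictBelow cl b ∧ a ∉ cl ∅ := by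
  simp only [ExchOver, mem_strictBelow, empty_union, not_forall, exists_prop]
  grind

namespace IsClosure

theorem cl_mono (hcl : IsClosure cl) (hAB : A ⊆ B) : cl A ⊆ cl B :=
  hcl.2 A B (hAB.trans (hcl.1 B))

theorem mem_cl_singleton_self (hcl : IsClosure cl) (b : X) : b ∈ cl {b} :=
  hcl.1 {b} (mem_singleton b)

theorem cl_singleton_subset (hcl : IsClosure cl) (hb : b ∈ cl A) : cl {b} ⊆ cl A :=
  hcl.2 {b} A (singleton_subset_iff.2 hb)

theorem cl_strictBelow_subset (hcl : IsClosure cl) (b : X) : cl (strictBelow cl b) ⊆ cl {b} :=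
  hcl.2 _ _ (strictBelow_subset_cl_singleton cl b)

theorem notMem_strictBelow_self (hcl : IsClosure cl) (b : X) : b ∉ strictBelow cl b :=
  fun hb => hb.2 (hcl.mem_cl_singleton_self b)

end IsClosure

namespace IsAuto

theorem apply_mem_cl_image_iff (hf : IsAuto cl f) : f a ∈ cl (f '' A) ↔ a ∈ cl A := by
  rw [← hf.2 A, hf.1.injective.mem_set_image]

theorem apply_mem_strictBelow_iff (hf : IsAuto cl f) :
    f a ∈ strictBelow cl (f b) ↔ a ∈ strictBelow cl b := by
  simp only [mem_strictBelow, ← image_singleton, hf.apply_mem_cl_image_iff]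

end IsAuto

namespace IsHomog

theorem mem_cl_strictBelow_self (hhom : IsHomog cl μ) (hcl : IsClosure cl)
    (hcard : #(strictBelow cl b) < μ) (hbc : b ∈ strictBelow cl c) :
    b ∈ cl (strictBelow cl b) := by
  by_contra hb
  have hc : c ∉ cl (strictBelow cl b) := fun hc => hbc.2 (hcl.cl_strictBelow_subset b hc)
  obtain ⟨f, hf, hfix, rfl⟩ := hhom _ hcard b c hb hc
  obtain ⟨x, hxb⟩ := hf.1.surjective b
  have hx : x ∈ strictBelow cl b := by
    rwa [← hf.apply_mem_strictBelow_iff, hxb]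
  have hx_eq : x = b := (hfix x hx).symm.trans hxb
  exact hcl.notMem_strictBelow_self b (hx_eq ▸ hx)

theorem exists_mem_strictBelow (hhom : IsHomog cl μ) (hμ : 0 < μ) (hfail : ¬ ExchOver cl ∅)
    (hb : b ∉ cl ∅) : ∃ c, b ∈ strictBelow cl c := by
  obtain ⟨a, c, hac, ha⟩ := not_exchOver_empty_iff.1 hfail
  obtain ⟨f, hf, -, rfl⟩ := hhom ∅ (by rwa [mk_eq_zero]) a b ha hb
  exact ⟨f c, hf.apply_mem_strictBelow_iff.2 hac⟩

end IsHomog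

theorem LSCard_mem (cl : Set X → Set X) :
    LSCard cl ∈ {μ : Cardinal.{u} | ℵ₀ ≤ μ ∧ ∀ A : Set X, #(cl A) ≤ #A + μ} :=
  csInf_mem ⟨max ℵ₀ #X, le_max_left _ _, fun A =>
    (mk_set_le (cl A)).trans <| (le_max_right _ _).trans (self_le_add_left _ _)⟩

theorem aleph0_le_LSCard (cl : Set X → Set X) : ℵ₀ ≤ LSCard cl :=
  (LSCard_mem cl).1

theorem mk_cl_le_LSCard (hA : #A ≤ LSCard cl) : #(cl A) ≤ LSCard cl :=
  ((LSCard_mem cl).2 A).trans (add_le_of_le (aleph0_le_LSCard cl) hA le_rfl)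

theorem mk_strictBelow_le_LSCard (cl : Set X → Set X) (b : X) :
    #(strictBelow cl b) ≤ LSCard cl := by
  have hb : #({b} : Set X) ≤ LSCard cl :=
    (mk_singleton b).trans_le (one_le_aleph0.trans (aleph0_le_LSCard cl))
  exact (mk_le_mk_of_subset (strictBelow_subset_cl_singleton cl b)).trans (mk_cl_le_LSCard hb)

theorem stmt10_general (hcl : IsClosure cl) (hhom : IsHomog cl μ) (hfail : ¬ ExchOver cl ∅)
    (hcard : #(strictBelow cl b) < μ) :
    cl (strictBelow cl b) = cl {b} := by
  refine (hcl.cl_strictBelow_subset b).antisymm (hcl.cl_singleton_subset ?_)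
  by_cases hb : b ∈ cl ∅
  · exact hcl.cl_mono (empty_subset _) hb
  · obtain ⟨c, hbc⟩ := hhom.exists_mem_strictBelow (zero_le.trans_lt hcard) hfail hb
    exact hhom.mem_cl_strictBelow_self hcl hcard hbc

end

/-- If `W` is `LS(W)⁺`-homogeneous, `∅` is closed, and exchange over `∅` fails,
then for every `b`, `cl({a : a < b}) = {a : a ≤ b}` (where `a ≤ b` iff
`a ∈ cl {b}` and `a < b` iff `a ≤ b` but not `b ≤ a`). -/
theorem stmt10 (cl : Set X → Set X) (hcl : IsClosure cl) (hempty : cl ∅ = ∅)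
    (hhom : IsHomog cl (Order.succ (LSCard cl))) (hfail : ¬ ExchOver cl ∅)
    (b : X) :
    cl {a : X | a ∈ cl {b} ∧ b ∉ cl {a}} = {a : X | a ∈ cl {b}} :=
  stmt10_general hcl hhom hfail (Order.lt_succ_of_le (mk_strictBelow_le_LSCard cl b))
end

section
/- Let K be a quasiminimal abstract elementary class, let M ∈ K, and let ā₁, ā₂, b̄₁ be finite sequences of elements of M. If ā₁ and ā₂ have the same Galois type over the empty set in M (equivalently, since K admits intersections, there is an isomorphism from cl^M(ā₁) onto cl^M(ā₂) sending ā₁ to ā₂), then there exists a finite sequence b̄₂ of elements of M such that the concatenations ā₁b̄₁ and ā₂b̄₂ have the same Galois type over the empty set in M (equivalently, there is an isomorphism from cl^M(ā₁b̄₁) onto cl^M(ā₂b̄₂) sending ā₁b̄₁ to ā₂b̄₂). -/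
open Cardinal Set FirstOrder

universe u

/-- A `τ`-structure whose universe is a subset of a fixed domain `Ω`. -/
def ModelOn (L : FirstOrder.Language.{u, u}) (Ω : Type u) : Type u :=
  Σ s : Set Ω, L.Structure s

variable {L : FirstOrder.Language.{u, u}} {Ω : Type u}

noncomputable instance modelStr (M : ModelOn L Ω) : L.Structure ↥M.1 := M.2

/-- `M` is a substructure of `N`: the universe of `M` is a subset of that of `N`
and the inclusion map is an `L`-embedding. -/
def ModelOn.IsSub (M N : ModelOn L Ω) : Prop :=
  M.1 ⊆ N.1 ∧ ∃ e : ↥M.1 ↪[L] ↥N.1, ∀ x : ↥M.1, (e x : Ω) = (x : Ω)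

/-- An abstract elementary class whose models have universes contained in `Ω`. -/
structure AECStr (L : FirstOrder.Language.{u, u}) (Ω : Type u) where
  /-- the class of models -/
  mem : Set (ModelOn L Ω)
  /-- the strong substructure relation `≤ₖ` -/
  le : ModelOn L Ω → ModelOn L Ω → Prop
  /-- the Löwenheim-Skolem-Tarski number -/
  LS : Cardinal.{u}
  le_refl : ∀ M ∈ mem, le M M
  le_antisymm : ∀ {M N}, le M N → le N M → M = N
  le_trans : ∀ {M N P}, le M N → le N P → le M P
  le_mem_left : ∀ {M N}, le M N → M ∈ mem
  le_mem_right : ∀ {M N}, le M N → N ∈ mem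
  /-- `M ≤ₖ N` implies that `M` is a substructure of `N` -/
  le_isSub : ∀ {M N}, le M N → ModelOn.IsSub M N
  /-- `K` and `≤ₖ` respect isomorphisms: if `M ≤ₖ N` and `f : N ≅ N'`, then
  `f[M] ≤ₖ N'` (phrased as: there is `M' ≤ₖ N'` and an isomorphism `g : M ≅ M'`
  agreeing with `f` on `M`). -/
  iso_resp : ∀ {M N N' : ModelOn L Ω}, le M N → ∀ f : ↥N.1 ≃[L] ↥N'.1,
    ∃ (M' : ModelOn L Ω) (g : ↥M.1 ≃[L] ↥M'.1), le M' N' ∧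
      ∀ (x : ↥M.1) (y : ↥N.1), (y : Ω) = (x : Ω) → ((g x : Ω)) = ((f y : Ω))
  /-- coherence -/
  coherence : ∀ {M₀ M₁ M₂}, le M₀ M₂ → le M₁ M₂ → M₀.1 ⊆ M₁.1 → le M₀ M₁
  /-- Tarski-Vaught chain axioms: a `≤ₖ`-directed system has a union which is in
  the class, lies above every member of the system, and is below any common
  extension of the system. -/
  chain_union : ∀ {ι : Type u} (Mi : ι → ModelOn L Ω), Nonempty ι →
    (∀ i j : ι, ∃ k, le (Mi i) (Mi k) ∧ le (Mi j) (Mi k)) →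
    ∃ M : ModelOn L Ω, M.1 = ⋃ i, (Mi i).1 ∧ (∀ i, le (Mi i) M) ∧
      ∀ N, (∀ i, le (Mi i) N) → le M N
  /-- `LS ≥ |τ| + ℵ₀` -/
  LS_ge : L.card + ℵ₀ ≤ LS
  /-- the Löwenheim-Skolem-Tarski axiom -/
  LST : ∀ M ∈ mem, ∀ A : Set Ω, A ⊆ M.1 →
    ∃ M₀, le M₀ M ∧ A ⊆ M₀.1 ∧ #M₀.1 ≤ #A + LS
  /-- `LS` is the least such cardinal -/
  LS_min : ∀ μ : Cardinal.{u}, L.card + ℵ₀ ≤ μ →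
    (∀ M ∈ mem, ∀ A : Set Ω, A ⊆ M.1 →
      ∃ M₀, le M₀ M ∧ A ⊆ M₀.1 ∧ #M₀.1 ≤ #A + μ) → LS ≤ μ

/-- `cl^N(A)`: the intersection of the universes of all `M ≤ₖ N` containing `A`. -/
def aecCl (K : AECStr L Ω) (N : ModelOn L Ω) (A : Set Ω) : Set Ω :=
  {x : Ω | ∀ M : ModelOn L Ω, K.le M N → A ⊆ M.1 → x ∈ M.1}

/-- `N` admits intersections: for every `A ⊆ |N|`, `cl^N(A)` is the universe of
some `M ≤ₖ N`. -/
def AdmitsInter (K : AECStr L Ω) (N : ModelOn L Ω) : Prop :=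
  ∀ A : Set Ω, A ⊆ N.1 → ∃ M : ModelOn L Ω, K.le M N ∧ M.1 = aecCl K N A

/-- There is a `K`-embedding of `M` into `N` fixing `F` pointwise: an isomorphism
from `M` onto some `M' ≤ₖ N` which is the identity on `F`. -/
def KEmbedFixing (K : AECStr L Ω) (M N : ModelOn L Ω) (F : Set Ω) : Prop :=
  ∃ M' : ModelOn L Ω, K.le M' N ∧
    ∃ g : ↥M.1 ≃[L] ↥M'.1, ∀ x : ↥M.1, (x : Ω) ∈ F → ((g x : Ω)) = (x : Ω)

/-- Uniqueness of the generic type, via the characterization of Galois types in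
classes admitting intersections: whenever `M ≤ₖ N₁`, `M ≤ₖ N₂` are countable
and `a₁ ∈ |N₁| \ |M|`, `a₂ ∈ |N₂| \ |M|`, there is an isomorphism from
`cl^{N₁}(|M| ∪ {a₁})` onto `cl^{N₂}(|M| ∪ {a₂})` fixing `M` pointwise and
sending `a₁` to `a₂`. -/
def GenericUnique (K : AECStr L Ω) : Prop :=
  ∀ M N₁ N₂ : ModelOn L Ω, K.le M N₁ → K.le M N₂ →
    #N₁.1 ≤ ℵ₀ → #N₂.1 ≤ ℵ₀ →
    ∀ a₁ a₂ : Ω, a₁ ∈ N₁.1 \ M.1 → a₂ ∈ N₂.1 \ M.1 →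
    ∃ M₁ M₂ : ModelOn L Ω, K.le M₁ N₁ ∧ K.le M₂ N₂ ∧
      M₁.1 = aecCl K N₁ (M.1 ∪ {a₁}) ∧ M₂.1 = aecCl K N₂ (M.1 ∪ {a₂}) ∧
      ∃ g : ↥M₁.1 ≃[L] ↥M₂.1,
        (∀ x : ↥M₁.1, (x : Ω) ∈ M.1 → ((g x : Ω)) = (x : Ω)) ∧
        (∀ x : ↥M₁.1, (x : Ω) = a₁ → ((g x : Ω)) = a₂)

/-- A quasiminimal AEC: countable `LS`, a prime model, countable models admit
intersections, and uniqueness of the generic type over countable models. -/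
def IsQuasiminimal (K : AECStr L Ω) : Prop :=
  K.LS = ℵ₀ ∧
  (∃ M ∈ K.mem, ∀ N ∈ K.mem, KEmbedFixing K M N ∅) ∧
  (∀ N ∈ K.mem, #N.1 ≤ ℵ₀ → AdmitsInter K N) ∧
  GenericUnique K

/-- There is an isomorphism from `cl^N(range c)` onto `cl^N(range d)` sending
the tuple `c` to the tuple `d` (the characterization of equality of the Galois
types of `c` and `d` over `∅` in `N`, in a class admitting intersections). -/
def ClTupleIso (K : AECStr L Ω) (N : ModelOn L Ω) {n : ℕ}
    (c d : Fin n → Ω) : Prop :=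
  ∃ M₁ M₂ : ModelOn L Ω, K.le M₁ N ∧ K.le M₂ N ∧
    M₁.1 = aecCl K N (Set.range c) ∧ M₂.1 = aecCl K N (Set.range d) ∧
    ∃ g : ↥M₁.1 ≃[L] ↥M₂.1,
      ∀ (x : ↥M₁.1) (i : Fin n), (x : Ω) = c i → ((g x : Ω)) = d i

/-!
Everything takes place inside a countable `N ≤ₖ M` containing the given tuples, where `cl^N = cl^M`
on subsets of `N`, and the isomorphism is extended one element `b` of `N` at a time. If
`b ∈ cl^N(ā₁)` there is nothing to do. Otherwise any `d ∈ N` outside `cl^N(ā₂)` is a possible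
image of `b`, by uniqueness of the generic type transported along `cl^N(ā₁) ≅ cl^N(ā₂)`. Such a `d`
exists: uniqueness of the generic type makes `cl^N` satisfy exchange, and if `cl^N(ā₂)` were all of
`N`, then `N` would be finitely generated, hence of finite dimension, and so not isomorphic to its
proper submodel `cl^N(ā₁)`.
-/

section Exchange

variable {α : Type*} {c : ClosureOperator (Set α)} {A S T X : Set α}

/-- `T` is independent over `A` for the closure operator `c`: no element of `T` lies in the closure
of `A` together with the other elements. -/
def ClIndep (c : ClosureOperator (Set α)) (A T : Set α) : Prop :=
  ∀ t ∈ T, t ∉ c (A ∪ T \ {t})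

/-- Steinitz exchange for `c`, with the exchanged element `d` taken in `X`. -/
def HasExchange (c : ClosureOperator (Set α)) (X : Set α) : Prop :=
  ∀ ⦃A : Set α⦄ ⦃b d : α⦄, d ∈ X → b ∈ c (insert d A) → b ∉ c A → d ∈ c (insert b A)

theorem ClIndep.mono (hT : ClIndep c A T) (hST : S ⊆ T) : ClIndep c A S :=
  fun t ht h => hT t (hST ht) (c.monotone (by gcongr) h)

theorem ClIndep.insert_sdiff_singleton {x : α} (hT : ClIndep c A T) (hx : x ∈ T) :
    ClIndep c (insert x A) (T \ {x}) := by
  rintro t ⟨ht, htx⟩ h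
  refine hT t ht (c.monotone ?_ h)
  rintro y ((rfl | hy) | ⟨⟨hy, -⟩, hyt⟩)
  exacts [.inr ⟨hx, fun e => htx e.symm⟩, .inl hy, .inr ⟨hy, hyt⟩]

theorem exists_clIndep_subset (hS : S.Finite) : ∃ I ⊆ S, S ⊆ c I ∧ ClIndep c ∅ I := by
  have hfin : {I | I ⊆ S ∧ S ⊆ c I}.Finite := hS.finite_subsets.subset fun I hI => hI.1
  obtain ⟨I, hI⟩ := hfin.exists_minimal ⟨S, subset_rfl, c.le_closure S⟩
  obtain ⟨hIS, hSI⟩ := hI.prop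
  refine ⟨I, hIS, hSI, fun t ht h => ?_⟩
  rw [empty_union] at h
  have hI_sub : I ⊆ c (I \ {t}) := fun y hy => by
    by_cases hyt : y = t
    · exact hyt ▸ h
    · exact c.le_closure _ ⟨hy, hyt⟩
  have hmin : I ⊆ I \ {t} := hI.le_of_le
    ⟨sdiff_subset.trans hIS, hSI.trans (c.le_closure_iff.1 hI_sub)⟩ sdiff_subset
  exact (hmin ht).2 rfl

theorem HasExchange.subset_closure_of_encard_le (hX : HasExchange c X) (hS : S.Finite)
    (hSX : S ⊆ X) (hT : ClIndep c A T) (hTS : T ⊆ c (A ∪ S)) (hcard : S.encard ≤ T.encard) :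
    S ⊆ c (A ∪ T) := by
  induction S, hS using Set.Finite.induction_on generalizing A T with
  | empty => exact empty_subset _
  | @insert y S hyS _ ih =>
    have hcard' {t : α} (ht : t ∈ T) : S.encard ≤ (T \ {t}).encard := by
      rwa [encard_insert_of_notMem hyS, ← encard_sdiff_singleton_add_one ht,
        ENat.add_le_add_iff_right ENat.one_ne_top] at hcard
    have hS_X := (subset_insert y S).trans hSX
    obtain ⟨x, hxT, hx⟩ : ∃ x ∈ T, x ∉ c (A ∪ S) := by
      by_contra! hTS'
      obtain ⟨t, ht⟩ : T.Nonempty := by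
        rw [← encard_pos]
        exact (encard_pos.2 (insert_nonempty y S)).trans_le hcard
      have hS_sub := ih hS_X (hT.mono sdiff_subset) (sdiff_subset.trans hTS') (hcard' ht)
      exact hT t ht (c.le_closure_iff.1
        (union_subset (subset_union_left.trans (c.le_closure _)) hS_sub) (hTS' t ht))
    have hy : y ∈ c (insert x A ∪ S) := by
      rw [insert_union]
      exact hX (hSX (mem_insert y S)) (union_insert ▸ hTS hxT) hx
    have hTS' : T \ {x} ⊆ c (insert x A ∪ S) := by
      have hA_sub : A ⊆ c (insert x A ∪ S) :=
        ((subset_insert x A).trans subset_union_left).trans (c.le_closure _)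
      have hS_sub : S ⊆ c (insert x A ∪ S) := subset_union_right.trans (c.le_closure _)
      exact sdiff_subset.trans (hTS.trans
        (c.le_closure_iff.1 (union_subset hA_sub (insert_subset hy hS_sub))))
    have hS_sub : S ⊆ c (A ∪ T) := by
      have := ih hS_X (hT.insert_sdiff_singleton hxT) hTS' (hcard' hxT)
      rwa [insert_union, ← union_insert, insert_sdiff_singleton, insert_eq_of_mem hxT] at this
    refine insert_subset (c.le_closure_iff.1 (union_subset (insert_subset ?_ ?_) hS_sub) hy) hS_sub
    · exact c.le_closure _ (.inr hxT)
    · exact subset_union_left.trans (c.le_closure _)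

end Exchange

theorem exists_injective_eqOn {α : Type*} {φ : α → α} {A : Set α} (hφ : InjOn φ A) :
    ∃ e₁ e₂ : α → α, Function.Injective e₁ ∧ Function.Injective e₂ ∧ EqOn (e₂ ∘ φ) e₁ A := by
  classical
  let f := Equiv.Set.imageOfInjOn φ A hφ
  rcases finite_or_infinite α with hα | hα
  · refine ⟨f.extendSubtype, id, f.extendSubtype.injective, Function.injective_id, fun x hx => ?_⟩
    exact (f.extendSubtype_apply_of_mem x hx).symm
  · obtain ⟨s⟩ : Nonempty (α ⊕ α ≃ α) := Cardinal.eq.1 (by simp)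
    -- `e₁` goes to the left copy of `α`, and `e₂` to the right copy except on `φ '' A`.
    let t : ↥(φ '' A) ⊕ ↥(φ '' A)ᶜ → α ⊕ α := Sum.map (fun y => f.symm y) (↑)
    have ht : Function.Injective t :=
      (Subtype.val_injective.comp f.symm.injective).sumMap Subtype.val_injective
    refine ⟨s ∘ Sum.inl, s ∘ t ∘ (Equiv.Set.sumCompl (φ '' A)).symm,
      s.injective.comp Sum.inl_injective, s.injective.comp (ht.comp (Equiv.injective _)),
      fun x hx => ?_⟩
    have hsymm : f.symm ⟨φ x, mem_image_of_mem φ hx⟩ = ⟨x, hx⟩ := f.symm_apply_apply ⟨x, hx⟩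
    simp only [Function.comp_apply, Equiv.Set.sumCompl_symm_apply_of_mem (mem_image_of_mem φ hx), t,
      Sum.map_inl, hsymm]

/-- `φ` restricts to an isomorphism from `M` onto `N`. The isomorphism is recorded by a function on
the whole domain, so that restrictions and composites need no coercions between universes. -/
def IsoOn (φ : Ω → Ω) (M N : ModelOn L Ω) : Prop :=
  ∃ g : ↥M.1 ≃[L] ↥N.1, ∀ x, (g x : Ω) = φ x

section IsoOn

variable {K : AECStr L Ω} {φ ψ : Ω → Ω} {M N P Q : ModelOn L Ω}

theorem exists_forall_coe_eq (g : ↥M.1 ≃[L] ↥N.1) : ∃ φ : Ω → Ω, ∀ x, (g x : Ω) = φ x := by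
  classical
  exact ⟨fun y => if h : y ∈ M.1 then g ⟨y, h⟩ else y, fun x => by simp⟩

theorem exists_isoOn_of_injOn (hφ : InjOn φ M.1) : ∃ N, IsoOn φ M N := by
  let e := Equiv.Set.imageOfInjOn φ M.1 hφ
  exact ⟨⟨φ '' M.1, e.inducedStructure⟩,
    letI := e.inducedStructure (L := L); e.inducedStructureEquiv, fun _ => rfl⟩

theorem IsoOn.comp (hψ : IsoOn ψ N P) (hφ : IsoOn φ M N) : IsoOn (ψ ∘ φ) M P := by
  obtain ⟨g, hg⟩ := hφ
  obtain ⟨g', hg'⟩ := hψ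
  exact ⟨g'.comp g, fun x => by simp [hg, hg']⟩

theorem IsoOn.congr (hφ : IsoOn φ M N) (h : EqOn φ ψ M.1) : IsoOn ψ M N := by
  obtain ⟨g, hg⟩ := hφ
  exact ⟨g, fun x => (hg x).trans (h x.2)⟩

theorem IsoOn.exists_inverse (hφ : IsoOn φ M N) : ∃ ψ, IsoOn ψ N M ∧ InvOn ψ φ M.1 N.1 := by
  obtain ⟨g, hg⟩ := hφ
  obtain ⟨ψ, hψ⟩ := exists_forall_coe_eq g.symm
  refine ⟨ψ, ⟨g.symm, hψ⟩, fun x hx => ?_, fun y hy => ?_⟩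
  · rw [← hg ⟨x, hx⟩, ← hψ, g.symm_apply_apply]
  · rw [← hψ ⟨y, hy⟩, ← hg, g.apply_symm_apply]

theorem IsoOn.mapsTo (hφ : IsoOn φ M N) : MapsTo φ M.1 N.1 := by
  obtain ⟨g, hg⟩ := hφ
  exact fun x hx => hg ⟨x, hx⟩ ▸ (g ⟨x, hx⟩).2

theorem IsoOn.bijOn (hφ : IsoOn φ M N) : BijOn φ M.1 N.1 := by
  obtain ⟨ψ, hψ, hinv⟩ := hφ.exists_inverse
  exact hinv.bijOn hφ.mapsTo hψ.mapsTo

theorem IsoOn.mapsTo_sdiff (hφ : IsoOn φ M N) (hPM : P.1 ⊆ M.1)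
    (hφP : IsoOn φ P Q) : MapsTo φ (M.1 \ P.1) (N.1 \ Q.1) := by
  rw [← hφP.bijOn.image_eq]
  exact fun x hx => ⟨hφ.mapsTo hx.1, fun h => hx.2 ((hφ.bijOn.injOn.mem_image_iff hPM hx.1).1 h)⟩

theorem IsoOn.mk_eq (hφ : IsoOn φ M N) : #M.1 = #N.1 :=
  hφ.elim fun g _ => Cardinal.mk_congr g.toEquiv

theorem structure_eq_of_toEquiv_eq_refl {α : Type*} {S T : L.Structure α}
    (g : @Language.Equiv L α α S T)
    (hg : @Language.Equiv.toEquiv L α α S T g = Equiv.refl α) : S = T := by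
  obtain ⟨e, hfun, hrel⟩ := g
  obtain rfl : e = .refl α := hg
  ext k f x
  · exact hfun f x
  · exact (hrel f x).symm

theorem eq_of_isoOn_id (h : IsoOn id M N) : M = N := by
  have huniv : M.1 = N.1 := (image_id M.1).symm.trans h.bijOn.image_eq
  obtain ⟨s, S⟩ := M
  obtain ⟨t, T⟩ := N
  obtain rfl : s = t := huniv
  obtain ⟨g, hg⟩ := h
  exact congrArg (Sigma.mk s)
    (structure_eq_of_toEquiv_eq_refl g (Equiv.ext fun x => Subtype.ext (hg x)))

theorem AECStr.subset_of_le (h : K.le M N) : M.1 ⊆ N.1 :=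
  (K.le_isSub h).1

theorem AECStr.eq_of_le_of_le (hM : K.le M P) (hN : K.le N P) (h : M.1 = N.1) :
    M = N :=
  K.le_antisymm (K.coherence hM hN h.subset) (K.coherence hN hM h.superset)

theorem AECStr.eq_of_le_of_subset (h : K.le M N) (hNM : N.1 ⊆ M.1) : M = N :=
  K.eq_of_le_of_le h (K.le_refl N (K.le_mem_right h)) ((K.subset_of_le h).antisymm hNM)

theorem IsoOn.exists_restrict (hφ : IsoOn φ M N) (hP : K.le P M) :
    ∃ Q, K.le Q N ∧ IsoOn φ P Q := by
  obtain ⟨g, hg⟩ := hφ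
  obtain ⟨Q, g', hQ, hg'⟩ := K.iso_resp hP g
  refine ⟨Q, hQ, g', fun x => ?_⟩
  rw [hg' x ⟨x, K.subset_of_le hP x.2⟩ rfl, hg]

theorem IsoOn.restrict (hφ : IsoOn φ M N) (hP : K.le P M)
    (hQ : K.le Q N) (h : φ '' P.1 = Q.1) : IsoOn φ P Q := by
  obtain ⟨R, hR, hφR⟩ := hφ.exists_restrict hP
  rwa [← K.eq_of_le_of_le hR hQ (hφR.bijOn.image_eq.symm.trans h)]

theorem IsoOn.right_unique (hφ : IsoOn φ M N) (hψ : IsoOn ψ M P) (h : EqOn φ ψ M.1) : N = P := by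
  obtain ⟨χ, hχ, hinv⟩ := hφ.exists_inverse
  refine eq_of_isoOn_id ((hψ.comp hχ).congr fun y hy => ?_)
  exact (h (hχ.mapsTo hy)).symm.trans (hinv.2 hy)

end IsoOn

section Closure

variable {K : AECStr L Ω} {M N P Q : ModelOn L Ω} {A B : Set Ω} {φ : Ω → Ω} {b : Ω}

theorem subset_aecCl : A ⊆ aecCl K N A :=
  fun _ hx _ _ hA => hA hx

theorem aecCl_min (h : A ⊆ aecCl K N B) : aecCl K N A ⊆ aecCl K N B :=
  fun _ hx M hM hB => hx M hM fun _ ha => h ha M hM hB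

/-- `cl^N` as a closure operator on all subsets of `Ω`, for use with the general theory of exchange.
Sets not contained in `N` have closure `Ω`. -/
def aecClosure (K : AECStr L Ω) (N : ModelOn L Ω) : ClosureOperator (Set Ω) :=
  ClosureOperator.mk₂ (aecCl K N) (fun _ => subset_aecCl) fun _ _ => aecCl_min

theorem aecCl_mono (h : A ⊆ B) : aecCl K N A ⊆ aecCl K N B :=
  (aecClosure K N).monotone h

theorem aecCl_insert_of_mem (hb : b ∈ aecCl K N A) : aecCl K N (insert b A) = aecCl K N A :=
  (aecCl_min (insert_subset hb subset_aecCl)).antisymm (aecCl_mono (subset_insert b A))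

theorem aecCl_insert_aecCl : aecCl K N (insert b (aecCl K N A)) = aecCl K N (insert b A) :=
  (aecCl_min (insert_subset (subset_aecCl (mem_insert b A))
    (aecCl_mono (subset_insert b A)))).antisymm (aecCl_mono (insert_subset_insert subset_aecCl))

theorem aecCl_subset_of_le (hP : K.le P N) (hA : A ⊆ P.1) : aecCl K N A ⊆ P.1 :=
  fun _ hx => hx P hP hA

theorem subset_of_notMem_aecCl (h : b ∉ aecCl K N A) : A ⊆ N.1 := by
  contrapose! h
  exact fun P hP hA => absurd (hA.trans (K.subset_of_le hP)) h

theorem aecCl_subset_aecCl_of_le (hP : K.le P N) : aecCl K N A ⊆ aecCl K P A :=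
  fun _ hx M hM hA => hx M (K.le_trans hM hP) hA

theorem aecCl_eq_of_le (hN : AdmitsInter K N) (hP : K.le P N) (hA : A ⊆ P.1) :
    aecCl K P A = aecCl K N A := by
  refine (aecCl_subset_aecCl_of_le hP).antisymm' ?_
  obtain ⟨Q, hQ, hQ_eq⟩ := hN A (hA.trans (K.subset_of_le hP))
  have hQP : K.le Q P := K.coherence hQ hP (hQ_eq ▸ aecCl_subset_of_le hP hA)
  exact hQ_eq ▸ aecCl_subset_of_le hQP (hQ_eq ▸ subset_aecCl)

theorem IsoOn.mapsTo_aecCl (hφ : IsoOn φ M N) (hA : A ⊆ M.1) :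
    MapsTo φ (aecCl K M A) (aecCl K N (φ '' A)) := by
  intro x hx R hR hAR
  obtain ⟨ψ, hψ, hinv⟩ := hφ.exists_inverse
  obtain ⟨Q, hQ, hψQ⟩ := hψ.exists_restrict hR
  have hAQ : A ⊆ Q.1 := fun a ha =>
    hinv.1 (hA ha) ▸ hψQ.mapsTo (hAR (mem_image_of_mem φ ha))
  obtain ⟨r, hr, rfl⟩ := hψQ.bijOn.surjOn (hx Q hQ hAQ)
  rwa [hinv.2 (K.subset_of_le hR hr)]

theorem IsoOn.image_aecCl (hφ : IsoOn φ M N) (hN : N ∈ K.mem) (hA : A ⊆ M.1) :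
    φ '' aecCl K M A = aecCl K N (φ '' A) := by
  obtain ⟨ψ, hψ, hinv⟩ := hφ.exists_inverse
  refine (hφ.mapsTo_aecCl hA).image_subset.antisymm fun y hy => ?_
  have hφA : φ '' A ⊆ N.1 := (hφ.mapsTo.mono_left hA).image_subset
  refine ⟨ψ y, ?_, hinv.2 (aecCl_subset_of_le (K.le_refl N hN) hφA hy)⟩
  simpa only [(hinv.1.mono hA).image_image] using hψ.mapsTo_aecCl hφA hy

theorem IsoOn.restrict_aecCl (hφ : IsoOn φ M N) (hA : A ⊆ M.1)
    (hP : K.le P M) (hQ : K.le Q N) (hP_eq : P.1 = aecCl K M A)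
    (hQ_eq : Q.1 = aecCl K N (φ '' A)) : IsoOn φ P Q :=
  hφ.restrict hP hQ (by rw [hP_eq, hQ_eq, hφ.image_aecCl (K.le_mem_right hQ) hA])

end Closure

section Generic

variable {K : AECStr L Ω} {M M₁ M₂ N N₁ N₂ P Q : ModelOn L Ω} {S : Set Ω} {φ : Ω → Ω} {b d : Ω}

theorem GenericUnique.exists_isoOn {a₁ a₂ : Ω} (hG : GenericUnique K)
    (h₁ : K.le M N₁) (h₂ : K.le M N₂) (hc₁ : #N₁.1 ≤ ℵ₀) (hc₂ : #N₂.1 ≤ ℵ₀)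
    (ha₁ : a₁ ∈ N₁.1 \ M.1) (ha₂ : a₂ ∈ N₂.1 \ M.1) :
    ∃ M₁ M₂ φ, K.le M₁ N₁ ∧ K.le M₂ N₂ ∧ M₁.1 = aecCl K N₁ (insert a₁ M.1) ∧
      M₂.1 = aecCl K N₂ (insert a₂ M.1) ∧ IsoOn φ M₁ M₂ ∧ (∀ x ∈ M.1, φ x = x) ∧ φ a₁ = a₂ := by
  obtain ⟨M₁, M₂, hM₁, hM₂, hM₁_eq, hM₂_eq, g, hgM, hga⟩ :=
    hG M N₁ N₂ h₁ h₂ hc₁ hc₂ a₁ a₂ ha₁ ha₂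
  rw [union_singleton] at hM₁_eq hM₂_eq
  obtain ⟨φ, hφ⟩ := exists_forall_coe_eq g
  have hsub : insert a₁ M.1 ⊆ M₁.1 := hM₁_eq ▸ subset_aecCl
  refine ⟨M₁, M₂, φ, hM₁, hM₂, hM₁_eq, hM₂_eq, ⟨g, hφ⟩, fun x hx => ?_, ?_⟩
  · rw [← hφ ⟨x, hsub (.inr hx)⟩, hgM _ hx]
  · rw [← hφ ⟨a₁, hsub (.inl rfl)⟩, hga _ rfl]

theorem exists_le_eq_sUnion {C : Set (Set Ω)} (hC : ∀ s ∈ C, ∃ P, K.le P N ∧ P.1 = s)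
    (hchain : IsChain (· ⊆ ·) C) (hne : C.Nonempty) : ∃ P, K.le P N ∧ P.1 = ⋃₀ C := by
  choose F hF hF_eq using fun s : C => hC s s.2
  have := hne.to_subtype
  have hmono {s t : C} (hst : s.1 ⊆ t.1) : K.le (F s) (F t) :=
    K.coherence (hF s) (hF t) (by rwa [hF_eq, hF_eq])
  obtain ⟨P, hP_eq, -, hP⟩ := K.chain_union F this fun s t => by
    rcases hchain.total s.2 t.2 with hst | hts
    · exact ⟨t, hmono hst, hmono subset_rfl⟩
    · exact ⟨s, hmono subset_rfl, hmono hts⟩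
  exact ⟨P, hP N hF, by simp only [hP_eq, hF_eq, sUnion_eq_iUnion]⟩

theorem exists_maximal_le_notMem (hM : K.le M N) (hb : b ∉ M.1) :
    ∃ Q, K.le Q N ∧ M.1 ⊆ Q.1 ∧ b ∉ Q.1 ∧
      ∀ R, K.le R N → Q.1 ⊆ R.1 → b ∉ R.1 → R.1 ⊆ Q.1 := by
  obtain ⟨_, hMQ, hQ_max⟩ := zorn_subset_nonempty {s | (∃ Q, K.le Q N ∧ Q.1 = s) ∧ b ∉ s}
    (fun C hC hchain hne => ⟨⋃₀ C,
      ⟨exists_le_eq_sUnion (fun s hs => (hC hs).1) hchain hne,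
        fun ⟨s, hs, hbs⟩ => (hC hs).2 hbs⟩,
      fun s hs => subset_sUnion_of_mem hs⟩)
    M.1 ⟨⟨M, hM, rfl⟩, hb⟩
  obtain ⟨⟨Q, hQ, rfl⟩, hbQ⟩ := hQ_max.prop
  exact ⟨Q, hQ, hMQ, hbQ, fun R hR hQR hbR => hQ_max.le_of_ge ⟨⟨R, hR, rfl⟩, hbR⟩ hQR⟩

theorem mem_of_maximal_le_notMem (hG : GenericUnique K) (hI : AdmitsInter K N) (hc : #N.1 ≤ ℵ₀)
    (hP : K.le P N) (hQ : K.le Q P) (hbP : b ∈ P.1) (hbQ : b ∉ Q.1)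
    (hQ_max : ∀ R, K.le R P → Q.1 ⊆ R.1 → b ∉ R.1 → R.1 ⊆ Q.1)
    (hd : d ∈ N.1) (hb : b ∈ aecCl K N (insert d Q.1)) : d ∈ P.1 := by
  by_contra hdP
  have hbQP : insert b Q.1 ⊆ P.1 := insert_subset hbP (K.subset_of_le hQ)
  have hQN := K.le_trans hQ hP
  obtain ⟨M₁, M₂, φ, hM₁, hM₂, hM₁_eq, hM₂_eq, hφ, hφQ, hφd⟩ :=
    hG.exists_isoOn hQN hQN hc hc ⟨hd, fun h => hdP (K.subset_of_le hQ h)⟩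
      ⟨K.subset_of_le hP hbP, hbQ⟩
  have hdQM₁ : insert d Q.1 ⊆ M₁.1 := hM₁_eq ▸ subset_aecCl
  have hbM₁ : b ∈ M₁.1 := hM₁_eq ▸ hb
  have hM₂P : K.le M₂ P := K.coherence hM₂ hP (hM₂_eq ▸ aecCl_subset_of_le hP hbQP)
  -- The image under `φ` of `D = cl^N(Q ∪ {b}) ⊆ P` omits `b = φ d`, so it is `Q` by maximality.
  obtain ⟨D, hD, hD_eq⟩ := hI (insert b Q.1) (hbQP.trans (K.subset_of_le hP))
  have hbQD : insert b Q.1 ⊆ D.1 := hD_eq ▸ subset_aecCl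
  have hdD : d ∉ D.1 := fun h => hdP (aecCl_subset_of_le hP hbQP (hD_eq ▸ h))
  have hDM₁ : K.le D M₁ := K.coherence hD hM₁
    (hD_eq ▸ aecCl_subset_of_le hM₁ (insert_subset hbM₁ ((subset_insert d _).trans hdQM₁)))
  obtain ⟨D', hD', hφD⟩ := hφ.exists_restrict hDM₁
  have hQD' : Q.1 ⊆ D'.1 := fun x hx =>
    hφQ x hx ▸ hφD.mapsTo (hbQD (mem_insert_of_mem b hx))
  have hbD' : b ∉ D'.1 := by
    rw [← hφD.bijOn.image_eq]
    rintro ⟨x, hx, hxb⟩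
    exact hdD (hφ.bijOn.injOn (K.subset_of_le hDM₁ hx) (hdQM₁ (mem_insert d _))
      (hxb.trans hφd.symm) ▸ hx)
  have hφb : φ b ∈ Q.1 :=
    hQ_max D' (K.le_trans hD' hM₂P) hQD' hbD' (hφD.mapsTo (hbQD (mem_insert b _)))
  exact hbQ (hφ.bijOn.injOn (hdQM₁ (mem_insert_of_mem d hφb)) hbM₁ (hφQ _ hφb) ▸ hφb)

theorem hasExchange_aecClosure (hG : GenericUnique K) (hI : AdmitsInter K N) (hc : #N.1 ≤ ℵ₀) :
    HasExchange (aecClosure K N) N.1 := by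
  intro A b d (hd : d ∈ N.1) (hb : b ∈ aecCl K N (insert d A)) (hbA : b ∉ aecCl K N A)
  by_contra hdb
  have hbAN : insert b A ⊆ N.1 := subset_of_notMem_aecCl hdb
  obtain ⟨P, hP, hP_eq⟩ := hI _ hbAN
  obtain ⟨Q₀, hQ₀, hQ₀_eq⟩ := hI A ((subset_insert b A).trans hbAN)
  have hQ₀P : K.le Q₀ P :=
    K.coherence hQ₀ hP (hQ₀_eq ▸ hP_eq ▸ aecCl_mono (subset_insert b A))
  obtain ⟨Q, hQ, hQ₀Q, hbQ, hQ_max⟩ := exists_maximal_le_notMem hQ₀P (hQ₀_eq ▸ hbA)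
  have hAQ : A ⊆ Q.1 := (hQ₀_eq ▸ subset_aecCl : A ⊆ Q₀.1).trans hQ₀Q
  have hbP : b ∈ P.1 := hP_eq ▸ subset_aecCl (mem_insert b A)
  refine hdb (hP_eq.subset (mem_of_maximal_le_notMem hG hI hc hP hQ hbP hbQ hQ_max hd ?_))
  exact aecCl_mono (insert_subset_insert hAQ) hb

theorem IsoOn.clIndep_image (hI : AdmitsInter K N) (hM : K.le M N) (hφ : IsoOn φ N M)
    (hSN : S ⊆ N.1) (hS : ClIndep (aecClosure K N) ∅ S) :
    ClIndep (aecClosure K N) ∅ (φ '' S) := by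
  rintro _ ⟨t, ht, rfl⟩ (h : φ t ∈ aecCl K N (∅ ∪ φ '' S \ {φ t}))
  have hSt : S \ {t} ⊆ N.1 := sdiff_subset.trans hSN
  have himage : φ '' S \ {φ t} = φ '' (S \ {t}) := by
    rw [(hφ.bijOn.injOn.mono hSN).image_sdiff_subset (singleton_subset_iff.2 ht), image_singleton]
  rw [empty_union, himage, ← aecCl_eq_of_le hI hM (hφ.mapsTo.mono_left hSt).image_subset,
    ← hφ.image_aecCl (K.le_mem_left hM) hSt,
    hφ.bijOn.injOn.mem_image_iff (aecCl_subset_of_le (K.le_refl N (K.le_mem_right hM)) hSt)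
      (hSN ht)] at h
  exact hS t ht (by rwa [empty_union])

theorem eq_of_isoOn_of_finite (hG : GenericUnique K) (hI : AdmitsInter K N) (hc : #N.1 ≤ ℵ₀)
    (hM : K.le M N) (hφ : IsoOn φ N M) (hS : S.Finite) (hNS : N.1 = aecCl K N S) : M = N := by
  obtain ⟨I, hIS, hSI, hI_indep⟩ := exists_clIndep_subset (c := aecClosure K N) hS
  have hNI : N.1 ⊆ aecCl K N I := hNS ▸ aecCl_min hSI
  have hIN : I ⊆ N.1 := hIS.trans (hNS ▸ subset_aecCl)
  have hφI : φ '' I ⊆ M.1 := (hφ.mapsTo.mono_left hIN).image_subset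
  have hI_sub : I ⊆ aecClosure K N (∅ ∪ φ '' I) := by
    refine (hasExchange_aecClosure hG hI hc).subset_closure_of_encard_le (hS.subset hIS) hIN
      (hφ.clIndep_image hI hM hIN hI_indep) ?_ (hφ.bijOn.injOn.mono hIN).encard_image.ge
    rw [empty_union]
    exact hφI.trans ((K.subset_of_le hM).trans hNI)
  rw [empty_union] at hI_sub
  exact K.eq_of_le_of_subset hM (hNI.trans ((aecCl_min hI_sub).trans (aecCl_subset_of_le hM hφI)))

theorem IsoOn.exists_common_base (h₁ : K.le M₁ N₁) (h₂ : K.le M₂ N₂) (hφ : IsoOn φ M₁ M₂) :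
    ∃ e₁ e₂ P₁ P₂ Q, IsoOn e₁ N₁ P₁ ∧ IsoOn e₂ N₂ P₂ ∧ K.le Q P₁ ∧ K.le Q P₂ ∧
      IsoOn e₁ M₁ Q ∧ IsoOn e₂ M₂ Q ∧ EqOn (e₂ ∘ φ) e₁ M₁.1 := by
  obtain ⟨e₁, e₂, he₁, he₂, heφ⟩ := exists_injective_eqOn hφ.bijOn.injOn
  obtain ⟨P₁, hP₁⟩ := exists_isoOn_of_injOn (M := N₁) he₁.injOn
  obtain ⟨P₂, hP₂⟩ := exists_isoOn_of_injOn (M := N₂) he₂.injOn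
  obtain ⟨Q, hQ, hMQ⟩ := hP₁.exists_restrict h₁
  obtain ⟨Q', hQ', hMQ'⟩ := hP₂.exists_restrict h₂
  obtain rfl : Q' = Q := (hMQ'.comp hφ).right_unique hMQ heφ
  exact ⟨e₁, e₂, P₁, P₂, Q', hP₁, hP₂, hQ, hQ', hMQ, hMQ', heφ⟩

theorem GenericUnique.exists_isoOn_insert (hG : GenericUnique K) (hI₁ : AdmitsInter K N₁)
    (hI₂ : AdmitsInter K N₂) (hc₁ : #N₁.1 ≤ ℵ₀) (hc₂ : #N₂.1 ≤ ℵ₀) (h₁ : K.le M₁ N₁)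
    (h₂ : K.le M₂ N₂) (hφ : IsoOn φ M₁ M₂) (hb : b ∈ N₁.1 \ M₁.1) (hd : d ∈ N₂.1 \ M₂.1) :
    ∃ P₁ P₂ χ, K.le P₁ N₁ ∧ K.le P₂ N₂ ∧ P₁.1 = aecCl K N₁ (insert b M₁.1) ∧
      P₂.1 = aecCl K N₂ (insert d M₂.1) ∧ IsoOn χ P₁ P₂ ∧ EqOn χ φ M₁.1 ∧ χ b = d := by
  obtain ⟨e₁, e₂, N₁', N₂', Q, he₁, he₂, hQ₁, hQ₂, heQ₁, heQ₂, heφ⟩ :=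
    hφ.exists_common_base h₁ h₂
  obtain ⟨R₁, R₂, γ, hR₁, hR₂, hR₁_eq, hR₂_eq, hγ, hγQ, hγb⟩ :=
    hG.exists_isoOn hQ₁ hQ₂ (he₁.mk_eq ▸ hc₁) (he₂.mk_eq ▸ hc₂)
      (he₁.mapsTo_sdiff (K.subset_of_le h₁) heQ₁ hb)
      (he₂.mapsTo_sdiff (K.subset_of_le h₂) heQ₂ hd)
  rw [← heQ₁.bijOn.image_eq, ← image_insert_eq] at hR₁_eq
  rw [← heQ₂.bijOn.image_eq, ← image_insert_eq] at hR₂_eq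
  have hbN : insert b M₁.1 ⊆ N₁.1 := insert_subset hb.1 (K.subset_of_le h₁)
  have hdN : insert d M₂.1 ⊆ N₂.1 := insert_subset hd.1 (K.subset_of_le h₂)
  obtain ⟨P₁, hP₁, hP₁_eq⟩ := hI₁ _ hbN
  obtain ⟨P₂, hP₂, hP₂_eq⟩ := hI₂ _ hdN
  have hdP : insert d M₂.1 ⊆ P₂.1 := hP₂_eq ▸ subset_aecCl
  obtain ⟨ψ, hψ, hinv⟩ := (he₂.restrict_aecCl hdN hP₂ hR₂ hP₂_eq hR₂_eq).exists_inverse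
  refine ⟨P₁, P₂, ψ ∘ γ ∘ e₁, hP₁, hP₂, hP₁_eq, hP₂_eq,
    hψ.comp (hγ.comp (he₁.restrict_aecCl hbN hP₁ hR₁ hP₁_eq hR₁_eq)), fun x hx => ?_, ?_⟩
  · calc ψ (γ (e₁ x)) = ψ (e₂ (φ x)) := by rw [hγQ _ (heQ₁.mapsTo hx), ← heφ hx, Function.comp]
      _ = φ x := hinv.1 (hdP (mem_insert_of_mem d (hφ.mapsTo hx)))
  · calc ψ (γ (e₁ b)) = ψ (e₂ d) := by rw [hγb]
      _ = d := hinv.1 (hdP (mem_insert d _))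

end Generic

/-- `φ` restricts to an isomorphism from `cl^N(A)` onto `cl^N(φ '' A)`. For `A` the range of a tuple
this says that the tuple and its image under `φ` have the same Galois type over `∅` in `N`. -/
def ClIsoOn (K : AECStr L Ω) (N : ModelOn L Ω) (φ : Ω → Ω) (A : Set Ω) : Prop :=
  ∃ P Q, K.le P N ∧ K.le Q N ∧ P.1 = aecCl K N A ∧ Q.1 = aecCl K N (φ '' A) ∧ IsoOn φ P Q

section ClIsoOn

variable {K : AECStr L Ω} {N : ModelOn L Ω} {φ : Ω → Ω} {A B : Set Ω} {b : Ω}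

theorem clTupleIso_iff {n : ℕ} {c d : Fin n → Ω} :
    ClTupleIso K N c d ↔ ∃ φ, ClIsoOn K N φ (range c) ∧ φ ∘ c = d := by
  constructor
  · rintro ⟨P, Q, hP, hQ, hP_eq, hQ_eq, g, hg⟩
    obtain ⟨φ, hφ⟩ := exists_forall_coe_eq g
    have hcP : range c ⊆ P.1 := hP_eq ▸ subset_aecCl
    have hφc : φ ∘ c = d := funext fun i => by
      rw [← hg ⟨c i, hcP (mem_range_self i)⟩ i rfl, hφ, Function.comp]
    exact ⟨φ, ⟨P, Q, hP, hQ, hP_eq, by rw [hQ_eq, ← hφc, range_comp], g, hφ⟩, hφc⟩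
  · rintro ⟨φ, ⟨P, Q, hP, hQ, hP_eq, hQ_eq, g, hg⟩, rfl⟩
    exact ⟨P, Q, hP, hQ, hP_eq, by rw [hQ_eq, range_comp], g, fun x i hx => by
      rw [hg, hx, Function.comp]⟩

theorem ClIsoOn.subset (h : ClIsoOn K N φ A) : A ⊆ N.1 := by
  obtain ⟨P, -, hP, -, hP_eq, -⟩ := h
  exact (hP_eq ▸ subset_aecCl : A ⊆ P.1).trans (K.subset_of_le hP)

theorem ClIsoOn.image_subset (h : ClIsoOn K N φ A) : φ '' A ⊆ N.1 := by
  obtain ⟨-, Q, -, hQ, -, hQ_eq, -⟩ := h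
  exact (hQ_eq ▸ subset_aecCl : φ '' A ⊆ Q.1).trans (K.subset_of_le hQ)

theorem ClIsoOn.exists_insert (hG : GenericUnique K) (hI : AdmitsInter K N) (hc : #N.1 ≤ ℵ₀)
    (hA : A.Finite) (h : ClIsoOn K N φ A) (hb : b ∈ N.1) :
    ∃ χ, ClIsoOn K N χ (insert b A) ∧ EqOn χ φ A := by
  obtain ⟨P, Q, hP, hQ, hP_eq, hQ_eq, hφ⟩ := h
  have hAP : A ⊆ P.1 := hP_eq ▸ subset_aecCl
  by_cases hbP : b ∈ P.1
  · have hφb : φ b ∈ aecCl K N (φ '' A) := hQ_eq ▸ hφ.mapsTo hbP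
    refine ⟨φ, ⟨P, Q, hP, hQ, ?_, ?_, hφ⟩, eqOn_refl φ A⟩
    · rw [aecCl_insert_of_mem (hP_eq ▸ hbP), hP_eq]
    · rw [image_insert_eq, aecCl_insert_of_mem hφb, hQ_eq]
  obtain ⟨d, hdN, hdQ⟩ : ∃ d ∈ N.1, d ∉ Q.1 := by
    by_contra! hNQ
    obtain rfl : Q = N := K.eq_of_le_of_subset hQ hNQ
    obtain ⟨ψ, hψ, -⟩ := hφ.exists_inverse
    obtain rfl : P = Q := eq_of_isoOn_of_finite hG hI hc hP hψ (hA.image φ) hQ_eq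
    exact hbP hb
  obtain ⟨P', Q', χ, hP', hQ', hP'_eq, hQ'_eq, hχ, hχφ, hχb⟩ :=
    hG.exists_isoOn_insert hI hI hc hc hP hQ hφ ⟨hb, hbP⟩ ⟨hdN, hdQ⟩
  refine ⟨χ, ⟨P', Q', hP', hQ', ?_, ?_, hχ⟩, hχφ.mono hAP⟩
  · rw [hP'_eq, hP_eq, aecCl_insert_aecCl]
  · rw [hQ'_eq, hQ_eq, aecCl_insert_aecCl, image_insert_eq, hχb, (hχφ.mono hAP).image_eq]

theorem ClIsoOn.exists_union (hG : GenericUnique K) (hI : AdmitsInter K N) (hc : #N.1 ≤ ℵ₀)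
    (hA : A.Finite) (h : ClIsoOn K N φ A) (hB : B.Finite) (hBN : B ⊆ N.1) :
    ∃ χ, ClIsoOn K N χ (A ∪ B) ∧ EqOn χ φ A := by
  induction B, hB using Set.Finite.induction_on with
  | empty => exact ⟨φ, by rwa [union_empty], eqOn_refl φ A⟩
  | @insert b B _ hB ih =>
    obtain ⟨χ, hχ, hχφ⟩ := ih ((subset_insert b B).trans hBN)
    obtain ⟨θ, hθ, hθχ⟩ := hχ.exists_insert hG hI hc (hA.union hB) (hBN (mem_insert b B))
    exact ⟨θ, by rwa [union_insert], (hθχ.mono subset_union_left).trans hχφ⟩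

end ClIsoOn

section Countable

variable {K : AECStr L Ω} {M N : ModelOn L Ω} {φ : Ω → Ω} {A : Set Ω}

theorem exists_countable_le (hLS : K.LS = ℵ₀) (hM : M ∈ K.mem) (hAM : A ⊆ M.1)
    (hA : A.Countable) : ∃ N, K.le N M ∧ A ⊆ N.1 ∧ #N.1 ≤ ℵ₀ := by
  obtain ⟨N, hN, hAN, hcard⟩ := K.LST M hM A hAM
  refine ⟨N, hN, hAN, hcard.trans ?_⟩
  rw [hLS]
  exact add_le_aleph0.2 ⟨hA.le_aleph0, le_rfl⟩

theorem aecCl_eq_of_countable (hLS : K.LS = ℵ₀)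
    (hI : ∀ N ∈ K.mem, #N.1 ≤ ℵ₀ → AdmitsInter K N) (hN : K.le N M) (hc : #N.1 ≤ ℵ₀)
    (hA : A ⊆ N.1) : aecCl K N A = aecCl K M A := by
  refine (aecCl_subset_aecCl_of_le hN).antisymm' fun x hx P hP hAP => ?_
  have hN_count : N.1.Countable := le_aleph0_iff_set_countable.1 hc
  obtain ⟨P', hP', hAP', hP'c⟩ :=
    exists_countable_le hLS (K.le_mem_left hP) hAP (hN_count.mono hA)
  have hP'M := K.le_trans hP' hP
  obtain ⟨Q, hQ, hNP'Q, hQc⟩ := exists_countable_le hLS (K.le_mem_right hN)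
    (union_subset (K.subset_of_le hN) (K.subset_of_le hP'M))
    (hN_count.union (le_aleph0_iff_set_countable.1 hP'c))
  obtain ⟨hNQ, hP'Q⟩ := union_subset_iff.1 hNP'Q
  rw [aecCl_eq_of_le (hI Q (K.le_mem_left hQ) hQc) (K.coherence hN hQ hNQ) hA] at hx
  exact K.subset_of_le hP' (aecCl_subset_of_le (K.coherence hP'M hQ hP'Q) hAP' hx)

theorem clIsoOn_iff_of_countable (hLS : K.LS = ℵ₀)
    (hI : ∀ N ∈ K.mem, #N.1 ≤ ℵ₀ → AdmitsInter K N) (hN : K.le N M) (hc : #N.1 ≤ ℵ₀)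
    (hA : A ⊆ N.1) (hφA : φ '' A ⊆ N.1) : ClIsoOn K N φ A ↔ ClIsoOn K M φ A := by
  have hcl {B : Set Ω} (hB : B ⊆ N.1) : aecCl K N B = aecCl K M B :=
    aecCl_eq_of_countable hLS hI hN hc hB
  simp only [ClIsoOn, hcl hA, hcl hφA]
  refine exists₂_congr fun P Q => ⟨?_, ?_⟩
  · rintro ⟨hP, hQ, h⟩
    exact ⟨K.le_trans hP hN, K.le_trans hQ hN, h⟩
  · rintro ⟨hP, hQ, hP_eq, hQ_eq, h⟩
    exact ⟨K.coherence hP hN (hP_eq ▸ aecCl_subset_of_le hN hA),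
      K.coherence hQ hN (hQ_eq ▸ aecCl_subset_of_le hN hφA), hP_eq, hQ_eq, h⟩

end Countable

theorem range_finAppend {α : Type*} {n m : ℕ} (a : Fin n → α) (b : Fin m → α) :
    range (Fin.append a b) = range a ∪ range b := by
  rw [← Sum.elim_range, ← Fin.append_comp_sumElim]
  exact (finSumFinEquiv.surjective.range_comp _).symm

theorem comp_finAppend {α β : Type*} {n m : ℕ} (f : α → β) (a : Fin n → α) (b : Fin m → α) :
    f ∘ Fin.append a b = Fin.append (f ∘ a) (f ∘ b) := by
  ext i
  cases i using Fin.addCases <;> simp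

theorem stmt18_general (K : AECStr L Ω) (hLS : K.LS = ℵ₀)
    (hI : ∀ N ∈ K.mem, #N.1 ≤ ℵ₀ → AdmitsInter K N) (hG : GenericUnique K)
    (M : ModelOn L Ω) (n m : ℕ) (a₁ a₂ : Fin n → Ω) (b₁ : Fin m → Ω)
    (hb₁ : Set.range b₁ ⊆ M.1) (h : ClTupleIso K M a₁ a₂) :
    ∃ b₂ : Fin m → Ω, Set.range b₂ ⊆ M.1 ∧
      ClTupleIso K M (Fin.append a₁ b₁) (Fin.append a₂ b₂) := by
  obtain ⟨φ, hφ, rfl⟩ := clTupleIso_iff.1 h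
  have hM : M ∈ K.mem := h.elim fun P ⟨_, hP, _⟩ => K.le_mem_right hP
  obtain ⟨N, hN, hsub, hc⟩ := exists_countable_le hLS hM
    (union_subset (union_subset hφ.subset hφ.image_subset) hb₁)
    (((finite_range a₁).union ((finite_range a₁).image φ)).union (finite_range b₁)).countable
  obtain ⟨⟨ha₁, ha₂⟩, hb₁N⟩ := union_subset_iff.1 hsub |>.imp_left union_subset_iff.1
  have hφN : ClIsoOn K N φ (range a₁) := (clIsoOn_iff_of_countable hLS hI hN hc ha₁ ha₂).2 hφ
  obtain ⟨χ, hχ, hχφ⟩ := hφN.exists_union hG (hI N (K.le_mem_left hN) hc) hc (finite_range a₁)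
    (finite_range b₁) hb₁N
  have hχM : ClIsoOn K M χ (range a₁ ∪ range b₁) :=
    (clIsoOn_iff_of_countable hLS hI hN hc hχ.subset hχ.image_subset).1 hχ
  refine ⟨χ ∘ b₁, ?_, clTupleIso_iff.2 ⟨χ, by rwa [range_finAppend], ?_⟩⟩
  · rw [range_comp]
    exact (image_mono subset_union_right).trans hχM.image_subset
  · rw [comp_finAppend, (eqOn_range.1 hχφ : χ ∘ a₁ = φ ∘ a₁)]

/-- Finite homogeneity of models of a quasiminimal AEC: if the finite tuples
`ā₁`, `ā₂` from `M` have the same Galois type over `∅` in `M` (equivalently,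
there is an isomorphism from `cl^M(ā₁)` onto `cl^M(ā₂)` sending `ā₁` to `ā₂`),
then for any finite tuple `b̄₁` from `M` there is a finite tuple `b̄₂` from `M`
such that `ā₁b̄₁` and `ā₂b̄₂` have the same Galois type over `∅` in `M`. -/
theorem stmt18 (K : AECStr L Ω) (hK : IsQuasiminimal K)
    (M : ModelOn L Ω) (hM : M ∈ K.mem) (n m : ℕ)
    (a₁ a₂ : Fin n → Ω) (b₁ : Fin m → Ω)
    (ha₁ : Set.range a₁ ⊆ M.1) (ha₂ : Set.range a₂ ⊆ M.1)
    (hb₁ : Set.range b₁ ⊆ M.1)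
    (h : ClTupleIso K M a₁ a₂) :
    ∃ b₂ : Fin m → Ω, Set.range b₂ ⊆ M.1 ∧
      ClTupleIso K M (Fin.append a₁ b₁) (Fin.append a₂ b₂) :=
  stmt18_general K hK.1 hK.2.2.1 hK.2.2.2 M n m a₁ a₂ b₁ hb₁ h
end
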